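/- arXiv:2403.08171 — 4 statements merged into one kernel-verified Lean document; each statement's English description precedes it below -/
import Mathlib

section
/- Let X ⊆ ℝ^d be a nonempty closed convex set, T ≥ 1, and η > 0 a constant step size. For t = 1, …, T let ℓ^t : ℝ^d → ℝ be convex and differentiable. Let x^1 ∈ X and define online gradient descent iterates x^{t+1} = Π_X[x^t − η ∇ℓ^t(x^t)] for t = 1, …, T. Let f : ℝ^d → ℝ be convex on X and suppose for each t = 1, …, T there is a proximal point p^t ∈ X of f at x^t over X. Then ∑_{t=1}^T ⟨∇ℓ^t(x^t), x^t − p^t⟩ ≤ (‖x^1 − p^1‖² + 2(f(p^1) − f(p^T)) − ‖x^{T+1} − p^T‖²)/(2η) + ∑_{t=1}^T (η/2)‖∇ℓ^t(x^t)‖² − ∑_{t=1}^{T−1} (1/(2η))‖p^t − p^{t+1}‖². -/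
open scoped InnerProductSpace

/-!
The objective of a proximal step is `1`-strongly convex, so it grows at least like `½‖y - p‖²` away
from its minimizer `p`. This growth is used twice: for the projection step along `-v t`, which is
the proximal step of the zero function, and for the move of the comparator from `p t` to
`p (t + 1)`. With the potential `2 f p + ‖x - p‖²`, the first use bounds `2η⟪v t, x t - p t⟫` by the
decrease of the potential when `x` moves, up to `η²‖v t‖²`; the second says that the potential
decreases by at least `‖p t - p (t + 1)‖²` when the comparator moves. The regret bound is the
telescoped sum.
-/

theorem sum_Icc_sub_eq_sub_add_sum_Ico {G : Type*} [AddCommGroup G] (a b : ℕ → G) {m n : ℕ}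
    (hmn : m ≤ n) :
    ∑ t ∈ Finset.Icc m n, (a t - b t) = a m - b n + ∑ t ∈ Finset.Ico m n, (a (t + 1) - b t) := by
  induction n, hmn using Nat.le_induction with
  | base => simp
  | succ n hmn ih =>
    rw [Finset.sum_Icc_succ_top (by lia), Finset.sum_Ico_succ_top hmn, ih]
    abel

section UniformConvexity

variable {E : Type*} [NormedAddCommGroup E] [NormedSpace ℝ E] {s : Set E} {φ : ℝ → ℝ}
  {f : E → ℝ} {p y : E}

open Filter Topology in
theorem add_modulus_le_of_uniformConvexOn_of_isMinOn (hf : UniformConvexOn s φ f)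
    (hmin : IsMinOn f s p) (hp : p ∈ s) (hy : y ∈ s) : f p + φ ‖y - p‖ ≤ f y := by
  have le_of_segment : ∀ᶠ r : ℝ in 𝓝[>] 0, f p + (1 - r) * φ ‖y - p‖ ≤ f y := by
    filter_upwards [Ioo_mem_nhdsGT one_pos] with r ⟨hr0, hr1⟩
    have hr : 0 ≤ 1 - r := by linarith
    have hle : f p ≤ r * f y + (1 - r) * f p - r * (1 - r) * φ ‖y - p‖ :=
      (hmin (hf.1 hy hp hr0.le hr (by ring))).trans (hf.2 hy hp hr0.le hr (by ring))
    refine le_of_mul_le_mul_left ?_ hr0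
    linarith
  have tendsto_growth :
      Tendsto (fun r : ℝ ↦ f p + (1 - r) * φ ‖y - p‖) (𝓝[>] 0) (𝓝 (f p + φ ‖y - p‖)) := by
    have hcont : Continuous fun r : ℝ ↦ f p + (1 - r) * φ ‖y - p‖ := by fun_prop
    simpa using (hcont.tendsto 0).mono_left nhdsWithin_le_nhds
  exact le_of_tendsto tendsto_growth le_of_segment

end UniformConvexity

section ProximalPoint

variable {E : Type*} [SeminormedAddCommGroup E] {X : Set E} {q z : E}

/-- `p` is a proximal point of `f` at `x` over `X`, with unit proximal parameter. It is a relation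
and not a function because neither existence nor uniqueness is assumed. For `f = 0` it says that `p`
is a metric projection of `x` onto `X`. -/
structure IsProximalPoint (f : E → ℝ) (X : Set E) (x p : E) : Prop where
  mem : p ∈ X
  isMinOn : IsMinOn (fun y ↦ f y + 1 / 2 * ‖y - x‖ ^ 2) X p

theorem IsProximalPoint.of_isMinOn_norm_sub (hq : q ∈ X) (hmin : IsMinOn (fun y ↦ ‖y - z‖) X q) :
    IsProximalPoint 0 X z q where
  mem := hq
  isMinOn y hy := by
    have hle : ‖q - z‖ ≤ ‖y - z‖ := hmin hy
    change 0 + 1 / 2 * ‖q - z‖ ^ 2 ≤ 0 + 1 / 2 * ‖y - z‖ ^ 2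
    gcongr

end ProximalPoint

section InnerProductSpace

variable {E : Type*} [NormedAddCommGroup E] [InnerProductSpace ℝ E] {X : Set E} {f : E → ℝ}
  {x p q u v y : E} {η : ℝ}

theorem strongConvexOn_add_norm_sub_sq (hf : ConvexOn ℝ X f) (m : ℝ) (x : E) :
    StrongConvexOn X m fun y ↦ f y + m / 2 * ‖y - x‖ ^ 2 := by
  have hlin : ConvexOn ℝ X fun y ↦ (-m) * ⟪x, y⟫_ℝ :=
    ((-m) • innerₗ E x).convexOn hf.1
  refine strongConvexOn_iff_convex.2 (((hf.add hlin).add_const (m / 2 * ‖x‖ ^ 2)).congr ?_)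
  intro y _
  simp only [Pi.add_apply, norm_sub_sq_real, real_inner_comm]
  ring

namespace IsProximalPoint

theorem three_point_inequality (hp : IsProximalPoint f X x p) (hf : ConvexOn ℝ X f) (hy : y ∈ X) :
    2 * f p + ‖x - p‖ ^ 2 + ‖y - p‖ ^ 2 ≤ 2 * f y + ‖x - y‖ ^ 2 := by
  have growth : f p + 1 / 2 * ‖p - x‖ ^ 2 + 1 / 2 * ‖y - p‖ ^ 2 ≤ f y + 1 / 2 * ‖y - x‖ ^ 2 :=
    add_modulus_le_of_uniformConvexOn_of_isMinOn (strongConvexOn_add_norm_sub_sq hf 1 x)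
      hp.isMinOn hp.mem hy
  rw [norm_sub_rev x p, norm_sub_rev x y]
  linarith

theorem two_mul_inner_sub_le (hq : IsProximalPoint 0 X (x - η • v) q) (hX : Convex ℝ X)
    (hu : u ∈ X) :
    2 * η * ⟪v, x - u⟫_ℝ ≤ ‖x - u‖ ^ 2 - ‖q - u‖ ^ 2 + η ^ 2 * ‖v‖ ^ 2 := by
  have nearest_le : ‖x - η • v - q‖ ^ 2 + ‖q - u‖ ^ 2 ≤ ‖x - η • v - u‖ ^ 2 := by
    simpa [norm_sub_rev u q] using hq.three_point_inequality (convexOn_const 0 hX) hu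
  have expand : ‖x - η • v - u‖ ^ 2
      = ‖x - u‖ ^ 2 - 2 * η * ⟪v, x - u⟫_ℝ + η ^ 2 * ‖v‖ ^ 2 := by
    rw [sub_right_comm, norm_sub_sq_real, real_inner_smul_right, real_inner_comm, norm_smul,
      mul_pow, Real.norm_eq_abs, sq_abs]
    ring
  linarith [sq_nonneg ‖x - η • v - q‖]

end IsProximalPoint

theorem two_mul_sum_inner_sub_le {v x p : ℕ → E} {T : ℕ} (hT : 1 ≤ T)
    (hstep : ∀ t ∈ Finset.Icc 1 T, IsProximalPoint 0 X (x t - η • v t) (x (t + 1)))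
    (hf : ConvexOn ℝ X f) (hp : ∀ t ∈ Finset.Icc 1 T, IsProximalPoint f X (x t) (p t)) :
    2 * η * ∑ t ∈ Finset.Icc 1 T, ⟪v t, x t - p t⟫_ℝ
      ≤ ‖x 1 - p 1‖ ^ 2 + 2 * (f (p 1) - f (p T)) - ‖x (T + 1) - p T‖ ^ 2
        + η ^ 2 * ∑ t ∈ Finset.Icc 1 T, ‖v t‖ ^ 2
        - ∑ t ∈ Finset.Ico 1 T, ‖p t - p (t + 1)‖ ^ 2 := by
  let potBefore (t : ℕ) : ℝ := 2 * f (p t) + ‖x t - p t‖ ^ 2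
  let potAfter (t : ℕ) : ℝ := 2 * f (p t) + ‖x (t + 1) - p t‖ ^ 2
  have iterate_move : ∀ t ∈ Finset.Icc 1 T,
      2 * η * ⟪v t, x t - p t⟫_ℝ ≤ potBefore t - potAfter t + η ^ 2 * ‖v t‖ ^ 2 := fun t ht ↦ by
    linarith [(hstep t ht).two_mul_inner_sub_le hf.1 (hp t ht).mem]
  have comparator_move : ∀ t ∈ Finset.Ico 1 T,
      potBefore (t + 1) - potAfter t ≤ -‖p t - p (t + 1)‖ ^ 2 := fun t ht ↦ by
    have ⟨ht1, htT⟩ := Finset.mem_Ico.1 ht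
    have hpt := (hp t (Finset.mem_Icc.2 ⟨ht1, htT.le⟩)).mem
    linarith [(hp (t + 1) (Finset.mem_Icc.2 ⟨by lia, htT⟩)).three_point_inequality hf hpt]
  calc 2 * η * ∑ t ∈ Finset.Icc 1 T, ⟪v t, x t - p t⟫_ℝ
      ≤ ∑ t ∈ Finset.Icc 1 T, (potBefore t - potAfter t + η ^ 2 * ‖v t‖ ^ 2) := by
        rw [Finset.mul_sum]
        exact Finset.sum_le_sum iterate_move
    _ = potBefore 1 - potAfter T + ∑ t ∈ Finset.Ico 1 T, (potBefore (t + 1) - potAfter t)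
          + η ^ 2 * ∑ t ∈ Finset.Icc 1 T, ‖v t‖ ^ 2 := by
        rw [Finset.sum_add_distrib, sum_Icc_sub_eq_sub_add_sum_Ico potBefore potAfter hT,
          ← Finset.mul_sum]
    _ ≤ potBefore 1 - potAfter T + ∑ t ∈ Finset.Ico 1 T, -‖p t - p (t + 1)‖ ^ 2
          + η ^ 2 * ∑ t ∈ Finset.Icc 1 T, ‖v t‖ ^ 2 := by
        gcongr with t ht
        exact comparator_move t ht
    _ = _ := by
        rw [Finset.sum_neg_distrib]
        ring

theorem stmt_4_general {T : ℕ} (hT : 1 ≤ T) (hη : 0 < η) {v x p : ℕ → E}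
    (hxX : ∀ t ∈ Finset.Icc 1 T, x (t + 1) ∈ X)
    (hstep : ∀ t ∈ Finset.Icc 1 T, IsMinOn (fun y ↦ ‖y - (x t - η • v t)‖) X (x (t + 1)))
    (hf : ConvexOn ℝ X f) (hp : ∀ t ∈ Finset.Icc 1 T, IsProximalPoint f X (x t) (p t)) :
    ∑ t ∈ Finset.Icc 1 T, ⟪v t, x t - p t⟫_ℝ
      ≤ (‖x 1 - p 1‖ ^ 2 + 2 * (f (p 1) - f (p T)) - ‖x (T + 1) - p T‖ ^ 2) / (2 * η)
        + ∑ t ∈ Finset.Icc 1 T, η / 2 * ‖v t‖ ^ 2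
        - ∑ t ∈ Finset.Icc 1 (T - 1), 1 / (2 * η) * ‖p t - p (t + 1)‖ ^ 2 := by
  have scaled_bound := two_mul_sum_inner_sub_le hT
    (fun t ht ↦ .of_isMinOn_norm_sub (hxX t ht) (hstep t ht)) hf hp
  rw [Finset.Icc_sub_one_right_eq_Ico_of_not_isMin (not_isMin_of_lt hT), ← Finset.mul_sum,
    ← Finset.mul_sum]
  refine le_of_mul_le_mul_left (scaled_bound.trans_eq ?_) (show 0 < 2 * η by positivity)
  field_simp

end InnerProductSpace

/-- Online gradient descent with constant step size `η > 0` over a nonempty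
closed convex set `X ⊆ ℝ^d`, against convex differentiable losses `ℓ^t` (with gradients `g t`),
satisfies the proximal regret bound for any `f` convex on `X`, with the constants
`D = ‖x 1 − p 1‖` and `B_f = f (p 1) − f (p T)`, where `p t` is a proximal point of `f`
at `x t` over `X`. -/
theorem stmt_4 {d : ℕ} {X : Set (EuclideanSpace ℝ (Fin d))}
    (hXne : X.Nonempty) (hXclosed : IsClosed X) (hXconv : Convex ℝ X)
    {T : ℕ} (hT : 1 ≤ T) {η : ℝ} (hη : 0 < η)
    {ℓ : ℕ → EuclideanSpace ℝ (Fin d) → ℝ}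
    {g : ℕ → EuclideanSpace ℝ (Fin d) → EuclideanSpace ℝ (Fin d)}
    (hconv : ∀ t ∈ Finset.Icc 1 T, ConvexOn ℝ Set.univ (ℓ t))
    (hgrad : ∀ t ∈ Finset.Icc 1 T, ∀ a, HasGradientAt (ℓ t) (g t a) a)
    (proj : EuclideanSpace ℝ (Fin d) → EuclideanSpace ℝ (Fin d))
    (hproj : ∀ z, proj z ∈ X ∧ ∀ y ∈ X, ‖proj z - z‖ ≤ ‖y - z‖)
    {x : ℕ → EuclideanSpace ℝ (Fin d)} (hx1 : x 1 ∈ X)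
    (hstep : ∀ t ∈ Finset.Icc 1 T, x (t + 1) = proj (x t - η • g t (x t)))
    {f : EuclideanSpace ℝ (Fin d) → ℝ} (hf : ConvexOn ℝ X f)
    {p : ℕ → EuclideanSpace ℝ (Fin d)} (hpX : ∀ t ∈ Finset.Icc 1 T, p t ∈ X)
    (hpmin : ∀ t ∈ Finset.Icc 1 T,
      IsMinOn (fun y => f y + (1 / 2) * ‖y - x t‖ ^ 2) X (p t)) :
    ∑ t ∈ Finset.Icc 1 T, ⟪g t (x t), x t - p t⟫_ℝ
      ≤ (‖x 1 - p 1‖ ^ 2 + 2 * (f (p 1) - f (p T)) - ‖x (T + 1) - p T‖ ^ 2) / (2 * η)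
        + ∑ t ∈ Finset.Icc 1 T, η / 2 * ‖g t (x t)‖ ^ 2
        - ∑ t ∈ Finset.Icc 1 (T - 1), 1 / (2 * η) * ‖p t - p (t + 1)‖ ^ 2 := by
  exact stmt_4_general hT hη (v := fun t ↦ g t (x t))
    (fun t ht ↦ hstep t ht ▸ (hproj _).1) (fun t ht y hy ↦ hstep t ht ▸ (hproj _).2 y hy)
    hf fun t ht ↦ ⟨hpX t ht, hpmin t ht⟩
end

section
/- Let X ⊆ ℝ^d be a nonempty compact convex set with diameter D > 0, let G > 0, T ≥ 1, and 0 < δ ≤ D. For t = 1, …, T let ℓ^t : ℝ^d → ℝ be convex and differentiable with ‖∇ℓ^t(x)‖ ≤ G for all x ∈ X. Let x^1 ∈ X and define online gradient descent iterates x^{t+1} = Π_X[x^t − η ∇ℓ^t(x^t)] with constant step size η = D/(G√T). Then for every x* ∈ X and every λ with 0 ≤ λ ≤ δ/D, ∑_{t=1}^T ( ℓ^t(x^t) − ℓ^t((1−λ)x^t + λx*) ) ≤ 2δG√T. -/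
/-!
A projected step of length `η` along `-v` from `x` satisfies
`2η⟪v, x - y⟫ ≤ ‖x - y‖² - ‖x⁺ - y‖² + η²‖v‖²` for every `y ∈ X`, because projecting onto a convex
set brings one no farther from its points. Summing over the rounds telescopes, and the step size
`η = D / (G√T)` balances the two remaining terms, so `∑ ⟪∇ℓᵗ(xᵗ), xᵗ - x*⟫ ≤ DG√T`. The
displacement from `xᵗ` to `(1 - λ)xᵗ + λx*` is `λ(x* - xᵗ)`, so linearizing the losses bounds the
regret against the interpolations by `λ` times this sum, and `λD ≤ δ`.
-/

open Finset Metric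

section FirstOrderConvexity

lemma le_sub_of_convexOn_of_hasFDerivWithinAt {E : Type*} [NormedAddCommGroup E] [NormedSpace ℝ E]
    {s : Set E} {f : E → ℝ} {f' : E →L[ℝ] ℝ} {a b : E} (hf : ConvexOn ℝ s f)
    (ha : a ∈ s) (hb : b ∈ s) (hf' : HasFDerivWithinAt f f' s a) :
    f' (b - a) ≤ f b - f a := by
  let line : ℝ →ᵃ[ℝ] E := AffineMap.lineMap a b
  have hconv : ConvexOn ℝ (line ⁻¹' s) (f ∘ line) := hf.comp_affineMap line
  have hderiv : HasDerivWithinAt (f ∘ line) (f' (b - a)) (line ⁻¹' s) 0 :=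
    hf'.comp_hasDerivWithinAt_of_eq 0 AffineMap.hasDerivWithinAt_lineMap
      (Set.mapsTo_preimage line s) (AffineMap.lineMap_apply_zero a b).symm
  have hslope : f' (b - a) ≤ slope (f ∘ line) 0 1 :=
    hconv.le_slope_of_hasDerivWithinAt (by simpa [line] using ha) (by simpa [line] using hb)
      zero_lt_one hderiv
  simpa [line, slope_def_field] using hslope

variable {E : Type*} [NormedAddCommGroup E] [InnerProductSpace ℝ E] [CompleteSpace E]
  {s : Set E} {f : E → ℝ} {v a b : E}

lemma sub_le_inner_of_convexOn_of_hasGradientWithinAt (hf : ConvexOn ℝ s f) (ha : a ∈ s)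
    (hb : b ∈ s) (hv : HasGradientWithinAt f v s a) :
    f a - f b ≤ inner ℝ v (a - b) := by
  have hsub : inner ℝ v (b - a) ≤ f b - f a :=
    le_sub_of_convexOn_of_hasFDerivWithinAt hf ha hb hv.hasFDerivWithinAt
  rw [← neg_sub b a, inner_neg_right]
  linarith

lemma sub_interpolation_le_mul_inner {c : ℝ} (hf : ConvexOn ℝ s f) (ha : a ∈ s) (hb : b ∈ s)
    (hv : HasGradientWithinAt f v s a) (hc₀ : 0 ≤ c) (hc₁ : c ≤ 1) :
    f a - f ((1 - c) • a + c • b) ≤ c * inner ℝ v (a - b) := by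
  have hmem : (1 - c) • a + c • b ∈ s := hf.1 ha hb (sub_nonneg.2 hc₁) hc₀ (sub_add_cancel 1 c)
  have hdisp : a - ((1 - c) • a + c • b) = c • (a - b) := by module
  simpa only [hdisp, real_inner_smul_right] using
    sub_le_inner_of_convexOn_of_hasGradientWithinAt hf ha hmem hv

end FirstOrderConvexity

variable {E : Type*} [NormedAddCommGroup E]

/-- `p` is a nearest point of `X` to `z`, i.e. a value of the metric projection `Π_X[z]`. This is
a relation between `z` and `p` because a general `X` may have no nearest point to `z`. -/
def IsNearestPoint (X : Set E) (z p : E) : Prop :=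
  p ∈ X ∧ ∀ y ∈ X, ‖p - z‖ ≤ ‖y - z‖

variable [InnerProductSpace ℝ E] {X : Set E}

namespace IsNearestPoint

variable {z p y : E}

lemma inner_sub_sub_nonpos (hp : IsNearestPoint X z p) (hX : Convex ℝ X) (hy : y ∈ X) :
    inner ℝ (z - p) (y - p) ≤ 0 := by
  have : Nonempty X := ⟨⟨p, hp.1⟩⟩
  refine (norm_eq_iInf_iff_real_inner_le_zero hX hp.1).1 (le_antisymm ?_ ?_) y hy
  · exact le_ciInf fun w ↦ by simpa only [norm_sub_rev z] using hp.2 w w.2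
  · exact ciInf_le ⟨0, Set.forall_mem_range.2 fun _ ↦ norm_nonneg _⟩ (⟨p, hp.1⟩ : X)

lemma norm_sub_sq_le (hp : IsNearestPoint X z p) (hX : Convex ℝ X) (hy : y ∈ X) :
    ‖p - y‖ ^ 2 ≤ ‖z - y‖ ^ 2 := by
  have hobtuse := hp.inner_sub_sub_nonpos hX hy
  rw [← sub_sub_sub_cancel_right z y p, norm_sub_sq_real (z - p), norm_sub_rev p y]
  linarith [sq_nonneg ‖z - p‖]

lemma two_mul_inner_le {x v : E} {η : ℝ} (hp : IsNearestPoint X (x - η • v) p)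
    (hX : Convex ℝ X) (hy : y ∈ X) :
    2 * η * inner ℝ v (x - y) ≤ ‖x - y‖ ^ 2 - ‖p - y‖ ^ 2 + η ^ 2 * ‖v‖ ^ 2 := by
  have hexpand : ‖x - η • v - y‖ ^ 2
      = ‖x - y‖ ^ 2 - 2 * η * inner ℝ v (x - y) + η ^ 2 * ‖v‖ ^ 2 := by
    rw [sub_right_comm, norm_sub_sq_real, real_inner_smul_right, real_inner_comm, norm_smul,
      mul_pow, Real.norm_eq_abs, sq_abs]
    ring
  linarith [hp.norm_sub_sq_le hX hy]

end IsNearestPoint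

/-- The iterates `x 1, …, x (T + 1)` of projected descent on `X` with step size `η`, where `v t` is
the direction received in round `t`; online gradient descent is the case where `v t` is the gradient
of the `t`-th loss at `x t`. Rounds are numbered from `1`, so `x 0` and `v 0` play no role. -/
structure IsProjectedDescent (X : Set E) (η : ℝ) (v x : ℕ → E) (T : ℕ) : Prop where
  initial_mem : x 1 ∈ X
  isNearestPoint_succ : ∀ t ∈ Icc 1 T, IsNearestPoint X (x t - η • v t) (x (t + 1))

namespace IsProjectedDescent

variable {η D G : ℝ} {v x : ℕ → E} {T : ℕ} {y : E}

lemma mem (h : IsProjectedDescent X η v x T) {t : ℕ} (ht : t ∈ Icc 1 T) : x t ∈ X := by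
  obtain ⟨ht₁, htT⟩ := mem_Icc.1 ht
  obtain rfl | hlt := ht₁.eq_or_lt
  · exact h.initial_mem
  · obtain ⟨s, rfl⟩ : ∃ s, t = s + 1 := ⟨t - 1, by lia⟩
    exact (h.isNearestPoint_succ s (mem_Icc.2 (by lia))).1

lemma two_mul_sum_inner_le (h : IsProjectedDescent X η v x T) (hX : Convex ℝ X) (hy : y ∈ X) :
    2 * η * ∑ t ∈ Icc 1 T, inner ℝ (v t) (x t - y)
      ≤ ‖x 1 - y‖ ^ 2 + η ^ 2 * ∑ t ∈ Icc 1 T, ‖v t‖ ^ 2 := by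
  have htelescope : ∑ t ∈ Icc 1 T, (‖x t - y‖ ^ 2 - ‖x (t + 1) - y‖ ^ 2)
      = ‖x 1 - y‖ ^ 2 - ‖x (T + 1) - y‖ ^ 2 := by
    rw [← Ico_add_one_right_eq_Icc, ← neg_inj, ← sum_neg_distrib]
    simpa only [neg_sub] using sum_Ico_sub (fun t ↦ ‖x t - y‖ ^ 2) (Nat.le_add_left 1 T)
  calc 2 * η * ∑ t ∈ Icc 1 T, inner ℝ (v t) (x t - y)
      ≤ ∑ t ∈ Icc 1 T, (‖x t - y‖ ^ 2 - ‖x (t + 1) - y‖ ^ 2 + η ^ 2 * ‖v t‖ ^ 2) := by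
        rw [mul_sum]
        exact sum_le_sum fun t ht ↦ (h.isNearestPoint_succ t ht).two_mul_inner_le hX hy
    _ = ‖x 1 - y‖ ^ 2 - ‖x (T + 1) - y‖ ^ 2 + η ^ 2 * ∑ t ∈ Icc 1 T, ‖v t‖ ^ 2 := by
        rw [sum_add_distrib, htelescope, mul_sum]
    _ ≤ ‖x 1 - y‖ ^ 2 + η ^ 2 * ∑ t ∈ Icc 1 T, ‖v t‖ ^ 2 := by
        gcongr
        exact sub_le_self _ (sq_nonneg _)

lemma sum_inner_le (h : IsProjectedDescent X (D / (G * √T)) v x T) (hX : Convex ℝ X)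
    (hy : y ∈ X) (hD : 0 < D) (hG : 0 < G) (hT : 1 ≤ T) (hdist : ‖x 1 - y‖ ≤ D)
    (hv : ∀ t ∈ Icc 1 T, ‖v t‖ ≤ G) :
    ∑ t ∈ Icc 1 T, inner ℝ (v t) (x t - y) ≤ D * G * √T := by
  have hsqrt : 0 < √(T : ℝ) := Real.sqrt_pos.2 (by exact_mod_cast hT)
  have hsum_sq : ∑ t ∈ Icc 1 T, ‖v t‖ ^ 2 ≤ T * G ^ 2 := by
    have hcard := sum_le_card_nsmul (Icc 1 T) (fun t ↦ ‖v t‖ ^ 2) (G ^ 2) fun t ht ↦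
      pow_le_pow_left₀ (norm_nonneg _) (hv t ht) 2
    simpa using hcard
  set η := D / (G * √T) with hη
  have hη_pos : 0 < η := div_pos hD (mul_pos hG hsqrt)
  have hbalance : η ^ 2 * (T * G ^ 2) = D ^ 2 := by
    rw [hη, div_pow, mul_pow, Real.sq_sqrt T.cast_nonneg]
    field_simp
  have hη_mul : η * (D * G * √T) = D ^ 2 := by
    rw [hη]
    field_simp
  refine le_of_mul_le_mul_left ?_ (mul_pos two_pos hη_pos)
  calc 2 * η * ∑ t ∈ Icc 1 T, inner ℝ (v t) (x t - y)
      ≤ ‖x 1 - y‖ ^ 2 + η ^ 2 * ∑ t ∈ Icc 1 T, ‖v t‖ ^ 2 := h.two_mul_sum_inner_le hX hy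
    _ ≤ D ^ 2 + η ^ 2 * (T * G ^ 2) := by gcongr
    _ = 2 * η * (D * G * √T) := by rw [hbalance, mul_assoc, hη_mul, two_mul]

end IsProjectedDescent

theorem stmt_10_general [CompleteSpace E] (hXbdd : Bornology.IsBounded X) (hXconv : Convex ℝ X)
    (hDpos : 0 < diam X) {G : ℝ} (hG : 0 < G) {T : ℕ} (hT : 1 ≤ T) {δ : ℝ} (hδD : δ ≤ diam X)
    {ℓ : ℕ → E → ℝ} {v x : ℕ → E} (hconv : ∀ t ∈ Icc 1 T, ConvexOn ℝ X (ℓ t))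
    (hgrad : ∀ t ∈ Icc 1 T, HasGradientWithinAt (ℓ t) (v t) X (x t))
    (hGb : ∀ t ∈ Icc 1 T, ‖v t‖ ≤ G)
    (hx : IsProjectedDescent X (diam X / (G * √T)) v x T)
    {xstar : E} (hxstar : xstar ∈ X) {lam : ℝ} (hlam₀ : 0 ≤ lam) (hlam : lam ≤ δ / diam X) :
    ∑ t ∈ Icc 1 T, (ℓ t (x t) - ℓ t ((1 - lam) • x t + lam • xstar)) ≤ δ * G * √T := by
  have hlam₁ : lam ≤ 1 := hlam.trans ((div_le_one hDpos).2 hδD)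
  have hdist : ‖x 1 - xstar‖ ≤ diam X := by
    simpa only [dist_eq_norm] using dist_le_diam_of_mem hXbdd hx.initial_mem hxstar
  calc ∑ t ∈ Icc 1 T, (ℓ t (x t) - ℓ t ((1 - lam) • x t + lam • xstar))
      ≤ lam * ∑ t ∈ Icc 1 T, inner ℝ (v t) (x t - xstar) := by
        rw [mul_sum]
        exact sum_le_sum fun t ht ↦ sub_interpolation_le_mul_inner (hconv t ht) (hx.mem ht)
          hxstar (hgrad t ht) hlam₀ hlam₁
    _ ≤ lam * (diam X * G * √T) := by
        gcongr
        exact hx.sum_inner_le hXconv hxstar hDpos hG hT hdist hGb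
    _ ≤ δ / diam X * (diam X * G * √T) := by gcongr
    _ = δ * G * √T := by field_simp

/-- Online gradient descent over a nonempty compact convex set
`X ⊆ ℝ^d` of diameter `D > 0`, with constant step size `η = D/(G√T)`, against convex
differentiable losses with gradients bounded by `G` on `X`, has
`Φ_int(δ)`-regret at most `2δG√T`: for every `x* ∈ X` and every `λ ∈ [0, δ/D]`,
`∑_{t=1}^T (ℓ^t(x^t) − ℓ^t((1−λ)x^t + λx*)) ≤ 2δG√T`. -/
theorem stmt_10 {d : ℕ} {X : Set (EuclideanSpace ℝ (Fin d))}
    (hXne : X.Nonempty) (hXcomp : IsCompact X) (hXconv : Convex ℝ X)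
    (hDpos : 0 < Metric.diam X)
    {G : ℝ} (hG : 0 < G) {T : ℕ} (hT : 1 ≤ T)
    {δ : ℝ} (hδ0 : 0 < δ) (hδD : δ ≤ Metric.diam X)
    {ℓ : ℕ → EuclideanSpace ℝ (Fin d) → ℝ}
    {g : ℕ → EuclideanSpace ℝ (Fin d) → EuclideanSpace ℝ (Fin d)}
    (hconv : ∀ t ∈ Finset.Icc 1 T, ConvexOn ℝ Set.univ (ℓ t))
    (hgrad : ∀ t ∈ Finset.Icc 1 T, ∀ a, HasGradientAt (ℓ t) (g t a) a)
    (hGb : ∀ t ∈ Finset.Icc 1 T, ∀ y ∈ X, ‖g t y‖ ≤ G)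
    (proj : EuclideanSpace ℝ (Fin d) → EuclideanSpace ℝ (Fin d))
    (hproj : ∀ z, proj z ∈ X ∧ ∀ y ∈ X, ‖proj z - z‖ ≤ ‖y - z‖)
    {x : ℕ → EuclideanSpace ℝ (Fin d)} (hx1 : x 1 ∈ X)
    (hstep : ∀ t ∈ Finset.Icc 1 T,
      x (t + 1) = proj (x t - (Metric.diam X / (G * Real.sqrt T)) • g t (x t)))
    {xstar : EuclideanSpace ℝ (Fin d)} (hxstar : xstar ∈ X)
    {lam : ℝ} (hlam0 : 0 ≤ lam) (hlam : lam ≤ δ / Metric.diam X) :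
    ∑ t ∈ Finset.Icc 1 T, (ℓ t (x t) - ℓ t ((1 - lam) • x t + lam • xstar))
      ≤ 2 * δ * G * Real.sqrt T := by
  have hx : IsProjectedDescent X (diam X / (G * √T)) (fun t ↦ g t (x t)) x T :=
    ⟨hx1, fun t ht ↦ hstep t ht ▸ hproj _⟩
  have hregret := stmt_10_general hXcomp.isBounded hXconv hDpos hG hT hδD
    (fun t ht ↦ (hconv t ht).subset (Set.subset_univ X) hXconv)
    (fun t ht ↦ (hgrad t ht (x t)).hasFDerivAt.hasFDerivWithinAt)
    (fun t ht ↦ hGb t ht _ (hx.mem ht)) hx hxstar hlam0 hlam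
  exact hregret.trans (by gcongr; linarith)
end

section
/- Let G be a simple graph on d ≥ 3 vertices with adjacency matrix A and clique number ω(G), let X = {x ∈ ℝ^d : x_i ≥ 0 for all i and ∑_i x_i ≤ 1}, and for an integer k with 1 ≤ k ≤ d define f_k(x) = xᵀAx − (1 − 1/k)(∑_i x_i)². For every δ ∈ (0,1] and every integer k with ω(G) + 1 ≤ k ≤ d, every x ∈ X with ∑_i x_i ≥ δ/2 is not a (δ²/(8d²), δ)-local maximizer of f_k over X; that is, there exists x′ ∈ X with ‖x′ − x‖₂ ≤ δ and f_k(x′) > f_k(x) + δ²/(8d²). -/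
/-- The feasible set `X = {x ∈ ℝ^d : x_i ≥ 0 ∀i, ∑_i x_i ≤ 1}`. -/
def stdCorner (d : ℕ) : Set (EuclideanSpace ℝ (Fin d)) :=
  {x | (∀ i, 0 ≤ x i) ∧ ∑ i, x i ≤ 1}

/-- The function `f_k(x) = xᵀ A x − (1 − 1/k)(∑_i x_i)²`, where `A` is the adjacency
matrix of the graph `G`. -/
noncomputable def fkFun {d : ℕ} (G : SimpleGraph (Fin d)) [DecidableRel G.Adj] (k : ℕ)
    (x : EuclideanSpace ℝ (Fin d)) : ℝ :=
  (∑ i, ∑ j, SimpleGraph.adjMatrix ℝ G i j * x i * x j)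
    - (1 - 1 / (k : ℝ)) * (∑ i, x i) ^ 2

/-!
By the Motzkin–Straus inequality `xᵀAx ≤ (1 - 1/ω) (∑ xᵢ)²` on the nonnegative orthant, so for
`k > ω` the function `f_k` is at most `-(1/ω - 1/k) (∑ xᵢ)²`, hence below `-(∑ xᵢ)² / k²`. Since
`f_k` is homogeneous of degree two, shrinking `x` towards the origin increases it quadratically.

For Motzkin–Straus, moving all the weight of one vertex onto a non-adjacent one changes `xᵀAx`
linearly, so one of the two directions does not decrease it; iterating makes the support a clique,
where `xᵀAx = (∑ xᵢ)² - ∑ xᵢ²` and Cauchy–Schwarz applies.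
-/

open Matrix

section TransferWeight

variable {V R : Type*} [DecidableEq V]

/-- The weight vector obtained from `x` by moving all the weight of the vertex `j` onto the
vertex `i`: the symmetrization step in the proof of the Motzkin–Straus inequality. For `i = j` it
is `x` itself. -/
def transferWeight [AddCommGroup R] (x : V → R) (i j : V) : V → R :=
  x + (Pi.single i (x j) - Pi.single j (x j))

theorem sum_transferWeight [Fintype V] [AddCommGroup R] (x : V → R) (i j : V) :
    ∑ v, transferWeight x i j v = ∑ v, x v := by
  simp [transferWeight, Finset.sum_add_distrib]

theorem transferWeight_nonneg [AddCommGroup R] [PartialOrder R] [IsOrderedAddMonoid R]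
    {x : V → R} (hx : 0 ≤ x) (i j : V) : 0 ≤ transferWeight x i j := by
  intro v
  have hsingle : (0 : V → R) ≤ Pi.single i (x j) := Pi.single_nonneg.2 (hx j)
  obtain rfl | hvj := eq_or_ne v j
  · simpa [transferWeight] using hsingle v
  · simpa [transferWeight, hvj] using add_nonneg (hx v) (hsingle v)

theorem support_transferWeight_ssubset [AddCommGroup R] {x : V → R} {i j : V} (hij : i ≠ j)
    (hi : x i ≠ 0) (hj : x j ≠ 0) :
    Function.support (transferWeight x i j) ⊂ Function.support x := by
  suffices hsubset : Function.support (transferWeight x i j) ⊆ Function.support x from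
    (Set.ssubset_iff_of_subset hsubset).2 ⟨j, hj, by simp [transferWeight, hij.symm]⟩
  refine Function.support_subset_iff'.2 fun v hxv => ?_
  rw [Function.notMem_support] at hxv
  have hvi : v ≠ i := by rintro rfl; exact hi hxv
  have hvj : v ≠ j := by rintro rfl; exact hj hxv
  simp [transferWeight, hvi, hvj, hxv]

end TransferWeight

section QuadraticForm

variable {V R : Type*} [Fintype V] [CommRing R]

theorem add_dotProduct_mulVec_add {A : Matrix V V R} (hA : A.IsSymm) (x u : V → R) :
    (x + u) ⬝ᵥ A *ᵥ (x + u) = x ⬝ᵥ A *ᵥ x + 2 * (u ⬝ᵥ A *ᵥ x) + u ⬝ᵥ A *ᵥ u := by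
  have cross : x ⬝ᵥ A *ᵥ u = u ⬝ᵥ A *ᵥ x := by
    rw [dotProduct_mulVec, ← mulVec_transpose, hA.eq, dotProduct_comm]
  rw [mulVec_add, add_dotProduct, dotProduct_add, dotProduct_add, cross]
  ring

variable (G : SimpleGraph V) [DecidableRel G.Adj]

theorem dotProduct_adjMatrix_mulVec_transferWeight [DecidableEq V] {i j : V} (hij : ¬G.Adj i j)
    (x : V → R) :
    transferWeight x i j ⬝ᵥ G.adjMatrix R *ᵥ transferWeight x i j =
      x ⬝ᵥ G.adjMatrix R *ᵥ x
        + 2 * x j * ((G.adjMatrix R *ᵥ x) i - (G.adjMatrix R *ᵥ x) j) := by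
  have hji : ¬G.Adj j i := mt SimpleGraph.Adj.symm hij
  have shift_dotProduct (y : V → R) :
      (Pi.single i (x j) - Pi.single j (x j)) ⬝ᵥ y = x j * (y i - y j) := by
    rw [sub_dotProduct, single_dotProduct, single_dotProduct, mul_sub]
  have shift_dotProduct_self :
      (Pi.single i (x j) - Pi.single j (x j)) ⬝ᵥ
        G.adjMatrix R *ᵥ (Pi.single i (x j) - Pi.single j (x j)) = 0 := by
    rw [shift_dotProduct]
    simp [hij, hji]
  rw [transferWeight, add_dotProduct_mulVec_add G.isSymm_adjMatrix, shift_dotProduct,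
    shift_dotProduct_self]
  ring

variable {G}

theorem dotProduct_adjMatrix_mulVec_of_isClique_support {x : V → R}
    (hx : G.IsClique (Function.support x)) :
    x ⬝ᵥ G.adjMatrix R *ᵥ x = (∑ v, x v) ^ 2 - ∑ v, x v ^ 2 := by
  classical
  have entry (i j : V) :
      x i * (G.adjMatrix R i j * x j) = x i * x j - if i = j then x i ^ 2 else 0 := by
    obtain rfl | hij := eq_or_ne i j
    · simp [sq]
    by_cases hi : x i = 0
    · simp [hi]
    by_cases hj : x j = 0
    · simp [hj, hij]
    simp [hx hi hj hij, hij]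
  simp only [dotProduct, mulVec, Finset.mul_sum, entry, Finset.sum_sub_distrib,
    Finset.sum_ite_eq, Finset.mem_univ, if_true]
  rw [sq (∑ v, x v), Finset.sum_mul_sum]

end QuadraticForm

theorem cliqueNum_pos {V : Type*} [Finite V] [Nonempty V] (G : SimpleGraph V) :
    0 < G.cliqueNum := by
  obtain ⟨v⟩ := ‹Nonempty V›
  have hcard : ({v} : Finset V).card ≤ G.cliqueNum :=
    SimpleGraph.IsClique.card_le_cliqueNum (tc := by simp)
  exact Nat.one_pos.trans_le hcard

section CliqueSupport

variable {V R : Type*} [Fintype V] [CommRing R] [LinearOrder R] [IsStrictOrderedRing R]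
  {G : SimpleGraph V}

theorem sq_sum_le_cliqueNum_mul_sum_sq {x : V → R} (hx : G.IsClique (Function.support x)) :
    (∑ v, x v) ^ 2 ≤ G.cliqueNum * ∑ v, x v ^ 2 := by
  classical
  have hcard : (Finset.univ.filter (x · ≠ 0)).card ≤ G.cliqueNum :=
    SimpleGraph.IsClique.card_le_cliqueNum (tc := by simpa [Function.support] using hx)
  calc (∑ v, x v) ^ 2
    _ = (∑ v with x v ≠ 0, x v) ^ 2 := by rw [Finset.sum_filter_ne_zero]
    _ ≤ (Finset.univ.filter (x · ≠ 0)).card * ∑ v with x v ≠ 0, x v ^ 2 :=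
      sq_sum_le_card_mul_sum_sq
    _ ≤ G.cliqueNum * ∑ v, x v ^ 2 := by
      gcongr
      exact Finset.filter_subset _ _

variable [DecidableRel G.Adj]

theorem exists_support_ssubset_of_not_isClique {x : V → R} (hx : 0 ≤ x)
    (hclique : ¬G.IsClique (Function.support x)) :
    ∃ y : V → R, 0 ≤ y ∧ Function.support y ⊂ Function.support x ∧ ∑ v, y v = ∑ v, x v ∧
      x ⬝ᵥ G.adjMatrix R *ᵥ x ≤ y ⬝ᵥ G.adjMatrix R *ᵥ y := by
  classical
  obtain ⟨i, hi, j, hj, hij, hadj⟩ :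
      ∃ i, x i ≠ 0 ∧ ∃ j, x j ≠ 0 ∧ i ≠ j ∧ ¬G.Adj i j := by
    simpa [SimpleGraph.IsClique, Set.Pairwise] using hclique
  wlog hle : (G.adjMatrix R *ᵥ x) j ≤ (G.adjMatrix R *ᵥ x) i generalizing i j
  · exact this j hj i hi hij.symm (mt SimpleGraph.Adj.symm hadj) (le_of_not_ge hle)
  refine ⟨transferWeight x i j, transferWeight_nonneg hx i j,
    support_transferWeight_ssubset hij hi hj, sum_transferWeight x i j, ?_⟩
  rw [dotProduct_adjMatrix_mulVec_transferWeight G hadj]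
  have hgain := mul_nonneg (mul_nonneg zero_le_two (hx j)) (sub_nonneg.2 hle)
  exact le_add_of_nonneg_right hgain

variable (G) in
theorem exists_isClique_support_dotProduct_le {x : V → R} (hx : 0 ≤ x) :
    ∃ y : V → R, G.IsClique (Function.support y) ∧ ∑ v, y v = ∑ v, x v ∧
      x ⬝ᵥ G.adjMatrix R *ᵥ x ≤ y ⬝ᵥ G.adjMatrix R *ᵥ y := by
  induction hS : Function.support x using WellFoundedLT.induction generalizing x with
  | ind S ih =>
    subst hS
    by_cases hclique : G.IsClique (Function.support x)
    · exact ⟨x, hclique, rfl, le_rfl⟩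
    obtain ⟨y, hy, hyx, hsum, hle⟩ := exists_support_ssubset_of_not_isClique hx hclique
    obtain ⟨z, hz, hzsum, hzle⟩ := ih _ hyx hy rfl
    exact ⟨z, hz, hzsum.trans hsum, hle.trans hzle⟩

end CliqueSupport

theorem motzkin_straus {V R : Type*} [Fintype V] [Field R] [LinearOrder R]
    [IsStrictOrderedRing R] (G : SimpleGraph V) [DecidableRel G.Adj] {x : V → R} (hx : 0 ≤ x) :
    x ⬝ᵥ G.adjMatrix R *ᵥ x ≤ (1 - 1 / (G.cliqueNum : R)) * (∑ v, x v) ^ 2 := by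
  cases isEmpty_or_nonempty V
  · simp
  have hω : (0 : R) < G.cliqueNum := mod_cast cliqueNum_pos G
  obtain ⟨y, hy, hsum, hle⟩ := exists_isClique_support_dotProduct_le G hx
  have hcs : (∑ v, y v) ^ 2 / G.cliqueNum ≤ ∑ v, y v ^ 2 :=
    (div_le_iff₀' hω).2 (sq_sum_le_cliqueNum_mul_sum_sq hy)
  calc x ⬝ᵥ G.adjMatrix R *ᵥ x
    _ ≤ y ⬝ᵥ G.adjMatrix R *ᵥ y := hle
    _ = (∑ v, y v) ^ 2 - ∑ v, y v ^ 2 := dotProduct_adjMatrix_mulVec_of_isClique_support hy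
    _ ≤ (∑ v, y v) ^ 2 - (∑ v, y v) ^ 2 / G.cliqueNum := sub_le_sub_left hcs _
    _ = (1 - 1 / (G.cliqueNum : R)) * (∑ v, x v) ^ 2 := by rw [hsum]; ring

theorem one_div_sq_lt_one_div_sub_one_div {R : Type*} [Field R] [LinearOrder R]
    [IsStrictOrderedRing R] {a b : R} (ha : 0 < a) (hab : a + 1 ≤ b) :
    1 / b ^ 2 < 1 / a - 1 / b := by
  have hb : 0 < b := by linarith
  calc 1 / b ^ 2
    _ < 1 / (a * b) := by
      apply one_div_lt_one_div_of_lt (mul_pos ha hb)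
      nlinarith
    _ ≤ (b - a) / (a * b) := by gcongr; linarith
    _ = 1 / a - 1 / b := by field_simp

theorem norm_le_sum_of_nonneg {ι : Type*} [Fintype ι] {x : EuclideanSpace ℝ ι}
    (hx : ∀ i, 0 ≤ x i) : ‖x‖ ≤ ∑ i, x i := by
  refine (sq_le_sq₀ (norm_nonneg x) (Finset.sum_nonneg fun i _ => hx i)).1 ?_
  rw [EuclideanSpace.real_norm_sq_eq]
  exact Finset.sum_sq_le_sq_sum_of_nonneg fun i _ => hx i

section Objective

variable {d : ℕ} {x : EuclideanSpace ℝ (Fin d)} {c : ℝ}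

theorem smul_mem_stdCorner (hc₀ : 0 ≤ c) (hc₁ : c ≤ 1) (hx : x ∈ stdCorner d) :
    c • x ∈ stdCorner d := by
  refine ⟨fun i => mul_nonneg hc₀ (hx.1 i), ?_⟩
  calc ∑ i, (c • x) i
    _ = c * ∑ i, x i := by simp [Finset.mul_sum]
    _ ≤ 1 := mul_le_one₀ hc₁ (Finset.sum_nonneg fun i _ => hx.1 i) hx.2

variable (G : SimpleGraph (Fin d)) [DecidableRel G.Adj] {k : ℕ}

theorem fkFun_eq_dotProduct_sub (k : ℕ) (x : EuclideanSpace ℝ (Fin d)) :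
    fkFun G k x =
      x.ofLp ⬝ᵥ G.adjMatrix ℝ *ᵥ x.ofLp - (1 - 1 / (k : ℝ)) * (∑ i, x i) ^ 2 := by
  simp only [fkFun, dotProduct, mulVec, Finset.mul_sum, mul_left_comm, mul_assoc]

theorem fkFun_smul (k : ℕ) (c : ℝ) (x : EuclideanSpace ℝ (Fin d)) :
    fkFun G k (c • x) = c ^ 2 * fkFun G k x := by
  simp only [fkFun_eq_dotProduct_sub, WithLp.ofLp_smul, mulVec_smul, dotProduct_smul,
    smul_dotProduct, Pi.smul_apply, smul_eq_mul, ← Finset.mul_sum]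
  ring

theorem fkFun_lt_neg_sq_sum_div_sq (hk : G.cliqueNum + 1 ≤ k) (hx : ∀ i, 0 ≤ x i)
    (hsum : 0 < ∑ i, x i) : fkFun G k x < -((∑ i, x i) ^ 2 / (k : ℝ) ^ 2) := by
  have : Nonempty (Fin d) := by
    by_contra hempty
    rw [not_nonempty_iff] at hempty
    simp at hsum
  have hω : (0 : ℝ) < G.cliqueNum := mod_cast cliqueNum_pos G
  have hgap := one_div_sq_lt_one_div_sub_one_div hω (mod_cast hk : (G.cliqueNum : ℝ) + 1 ≤ k)
  calc fkFun G k x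
    _ ≤ (1 - 1 / (G.cliqueNum : ℝ)) * (∑ i, x i) ^ 2
          - (1 - 1 / (k : ℝ)) * (∑ i, x i) ^ 2 := by
      rw [fkFun_eq_dotProduct_sub]
      exact sub_le_sub_right (motzkin_straus G hx) _
    _ = -((1 / (G.cliqueNum : ℝ) - 1 / k) * (∑ i, x i) ^ 2) := by ring
    _ < -(1 / (k : ℝ) ^ 2 * (∑ i, x i) ^ 2) := by gcongr
    _ = -((∑ i, x i) ^ 2 / (k : ℝ) ^ 2) := by ring

theorem stmt_14_general {δ : ℝ} (hδ : 0 < δ) (hk : G.cliqueNum + 1 ≤ k) (hx : x ∈ stdCorner d)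
    (hδx : δ ≤ ∑ i, x i) :
    ∃ x' ∈ stdCorner d, ‖x' - x‖ ≤ δ ∧ fkFun G k x + δ ^ 2 / (k : ℝ) ^ 2 < fkFun G k x' := by
  set s := ∑ i, x i
  have hs₀ : 0 < s := hδ.trans_le hδx
  obtain ⟨t, ht⟩ : ∃ t, t * s = δ := ⟨δ / s, div_mul_cancel₀ δ hs₀.ne'⟩
  have ht₀ : 0 < t := pos_of_mul_pos_left (ht ▸ hδ) hs₀.le
  have ht₁ : t ≤ 1 := le_of_mul_le_mul_right (by rwa [ht, one_mul]) hs₀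
  refine ⟨(1 - t) • x, smul_mem_stdCorner (by linarith) (by linarith) hx, ?_, ?_⟩
  · calc ‖(1 - t) • x - x‖
      _ = t * ‖x‖ := by
        rw [sub_smul, one_smul, sub_sub_cancel_left, norm_neg, norm_smul_of_nonneg ht₀.le]
      _ ≤ t * s := by gcongr; exact norm_le_sum_of_nonneg hx.1
      _ = δ := ht
  · have hf := fkFun_lt_neg_sq_sum_div_sq G hk hx.1 hs₀
    have hdecay : 0 < 1 - (1 - t) ^ 2 := by nlinarith
    calc fkFun G k x + δ ^ 2 / (k : ℝ) ^ 2
      _ = fkFun G k x + t ^ 2 * (s ^ 2 / (k : ℝ) ^ 2) := by rw [← ht]; ring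
      _ ≤ fkFun G k x + (1 - (1 - t) ^ 2) * (s ^ 2 / (k : ℝ) ^ 2) := by gcongr; nlinarith
      _ < fkFun G k x + (1 - (1 - t) ^ 2) * (-fkFun G k x) := by
        gcongr
        exact lt_neg_of_lt_neg hf
      _ = fkFun G k ((1 - t) • x) := by rw [fkFun_smul]; ring

end Objective

/-- For every `δ ∈ (0,1]` and every integer `k` with
`ω(G) + 1 ≤ k ≤ d`, every `x ∈ X` with `∑_i x_i ≥ δ/2` is not a
`(δ²/(8d²), δ)`-local maximizer of `f_k` over `X`: there is `x′ ∈ X` with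
`‖x′ − x‖₂ ≤ δ` and `f_k(x′) > f_k(x) + δ²/(8d²)`. -/
theorem stmt_14 {d : ℕ} (hd : 3 ≤ d) (G : SimpleGraph (Fin d)) [DecidableRel G.Adj]
    {δ : ℝ} (hδ0 : 0 < δ) (hδ1 : δ ≤ 1)
    {k : ℕ} (hk : G.cliqueNum + 1 ≤ k) (hkd : k ≤ d)
    {x : EuclideanSpace ℝ (Fin d)} (hx : x ∈ stdCorner d)
    (hxbig : δ / 2 ≤ ∑ i, x i) :
    ∃ x' ∈ stdCorner d, ‖x' - x‖ ≤ δ ∧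
      fkFun G k x + δ ^ 2 / (8 * (d : ℝ) ^ 2) < fkFun G k x' := by
  obtain ⟨x', hx', hdist, hgain⟩ := stmt_14_general G (half_pos hδ0) hk hx hxbig
  refine ⟨x', hx', by linarith, lt_of_le_of_lt ?_ hgain⟩
  have hk₀ : (0 : ℝ) < k := mod_cast (Nat.succ_pos _).trans_le hk
  rw [div_pow, div_div]
  gcongr
  norm_num
end

section
/- Let G be a simple graph on d ≥ 3 vertices with adjacency matrix A and clique number ω(G), let X = {x ∈ ℝ^d : x_i ≥ 0 for all i and ∑_i x_i ≤ 1}, and for an integer k with 1 ≤ k ≤ d define f_k(x) = xᵀAx − (1 − 1/k)(∑_i x_i)². Fix δ ∈ (0,1] and an integer k with 1 ≤ k < ω(G). Then there exists a point x* in the standard simplex Δ^d = {x ∈ ℝ^d : x_i ≥ 0 for all i, ∑_i x_i = 1} such that the single map φ(x) = (1 − δ/√d)·x + (δ/√d)·x* satisfies: for every x ∈ X with ‖x‖₁ ≤ δ/(12d³), f_k(φ(x)) − f_k(x) > δ²/(144d⁸). -/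
/-!
Write `q(x) = xᵀAx - c(∑ x)²` with `c = 1 - 1/k`. At the uniform distribution `u` on a clique of
size `ω > k` one has `q(u) = 1/k - 1/ω ≥ 1/d²`. Moving from `x` to `(1 - t)x + tu` gains `t² q(u)`,
while everything lost (the contraction of `q(x) ≤ (1 - c)(∑ x)²` and the cross term of `-c(∑ x)²`)
is at most `2t ∑ x`, since the cross term of `xᵀAx` is nonnegative. For `∑ x` of order `δ/d³` and
`t = δ/√d` the gain wins.
-/

open Matrix

section MotzkinStrausForm

variable {V : Type*} [Fintype V]

/-- The Motzkin–Straus quadratic form `xᵀAx - c(∑ x)²` of a matrix `A`, penalized by a multiple `c`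
of the squared total mass. For the adjacency matrix of a graph and `c = 1 - 1/k`, it takes a
positive value on the standard simplex exactly when the graph has a clique of more than `k`
vertices. -/
def motzkinStrausForm (A : Matrix V V ℝ) (c : ℝ) (x : V → ℝ) : ℝ :=
  x ⬝ᵥ A *ᵥ x - c * (∑ i, x i) ^ 2

lemma motzkinStrausForm_smul_add_smul (A : Matrix V V ℝ) (c a b : ℝ) (x y : V → ℝ) :
    motzkinStrausForm A c (a • x + b • y) =
      a ^ 2 * motzkinStrausForm A c x + b ^ 2 * motzkinStrausForm A c y +
        a * b * (x ⬝ᵥ A *ᵥ y + y ⬝ᵥ A *ᵥ x - 2 * c * (∑ i, x i) * ∑ i, y i) := by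
  simp only [motzkinStrausForm, mulVec_add, mulVec_smul, add_dotProduct, dotProduct_add,
    smul_dotProduct, dotProduct_smul, smul_eq_mul, Pi.add_apply, Pi.smul_apply,
    Finset.sum_add_distrib, ← Finset.mul_sum]
  ring

lemma dotProduct_mulVec_nonneg {A : Matrix V V ℝ} (hA : ∀ i j, 0 ≤ A i j) {x y : V → ℝ}
    (hx : 0 ≤ x) (hy : 0 ≤ y) : 0 ≤ x ⬝ᵥ A *ᵥ y :=
  dotProduct_nonneg_of_nonneg hx fun i ↦ dotProduct_nonneg_of_nonneg (hA i) hy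

lemma dotProduct_mulVec_le_sum_mul_sum {A : Matrix V V ℝ} (hA : ∀ i j, A i j ≤ 1) {x y : V → ℝ}
    (hx : 0 ≤ x) (hy : 0 ≤ y) : x ⬝ᵥ A *ᵥ y ≤ (∑ i, x i) * ∑ i, y i := by
  have mulVec_le (i : V) : (A *ᵥ y) i ≤ ∑ j, y j :=
    Finset.sum_le_sum fun j _ ↦ mul_le_of_le_one_left (hy j) (hA i j)
  rw [Finset.sum_mul]
  exact Finset.sum_le_sum fun i _ ↦ mul_le_mul_of_nonneg_left (mulVec_le i) (hx i)

lemma motzkinStrausForm_le {A : Matrix V V ℝ} (hA : ∀ i j, A i j ≤ 1) (c : ℝ) {x : V → ℝ}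
    (hx : 0 ≤ x) : motzkinStrausForm A c x ≤ (1 - c) * (∑ i, x i) ^ 2 := by
  have := dotProduct_mulVec_le_sum_mul_sum hA hx hx
  rw [motzkinStrausForm]
  linarith

lemma le_motzkinStrausForm_convexComb_sub {A : Matrix V V ℝ} (hA₀ : ∀ i j, 0 ≤ A i j)
    (hA₁ : ∀ i j, A i j ≤ 1) {c t : ℝ} (hc₀ : 0 ≤ c) (hc₁ : c ≤ 1) (ht₀ : 0 ≤ t) (ht₁ : t ≤ 1)
    {x y : V → ℝ} (hx : 0 ≤ x) (hx₁ : ∑ i, x i ≤ 1) (hy : y ∈ stdSimplex ℝ V) :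
    t ^ 2 * motzkinStrausForm A c y - 2 * t * ∑ i, x i ≤
      motzkinStrausForm A c ((1 - t) • x + t • y) - motzkinStrausForm A c x := by
  set s := ∑ i, x i
  have hs : 0 ≤ s := Finset.sum_nonneg fun i _ ↦ hx i
  have cross_nonneg : 0 ≤ (1 - t) * t * (x ⬝ᵥ A *ᵥ y + y ⬝ᵥ A *ᵥ x) :=
    mul_nonneg (mul_nonneg (sub_nonneg.2 ht₁) ht₀) <|
      add_nonneg (dotProduct_mulVec_nonneg hA₀ hx hy.1) (dotProduct_mulVec_nonneg hA₀ hy.1 hx)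
  have contraction_loss : t * (2 - t) * motzkinStrausForm A c x ≤ 2 * t * s * (1 - c) := calc
    t * (2 - t) * motzkinStrausForm A c x ≤ t * (2 - t) * ((1 - c) * s ^ 2) :=
      mul_le_mul_of_nonneg_left (motzkinStrausForm_le hA₁ c hx) (mul_nonneg ht₀ (by linarith))
    _ ≤ t * 2 * ((1 - c) * s) := by
      have : 0 ≤ 1 - c := sub_nonneg.2 hc₁
      have : s ^ 2 ≤ s := pow_le_of_le_one hs hx₁ two_ne_zero
      gcongr
      linarith
    _ = 2 * t * s * (1 - c) := by ring
  have mass_loss : 2 * t * s * c * (1 - t) ≤ 2 * t * s * c :=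
    mul_le_of_le_one_right (by positivity) (by linarith)
  rw [motzkinStrausForm_smul_add_smul, hy.2]
  linarith

end MotzkinStrausForm

section Clique

variable {V : Type*} {G : SimpleGraph V} [DecidableRel G.Adj]

lemma adjMatrix_apply_nonneg (v w : V) : 0 ≤ G.adjMatrix ℝ v w := by
  rw [SimpleGraph.adjMatrix_apply]
  split_ifs <;> norm_num

lemma adjMatrix_apply_le_one (v w : V) : G.adjMatrix ℝ v w ≤ 1 := by
  rw [SimpleGraph.adjMatrix_apply]
  split_ifs <;> norm_num

variable [Fintype V]

lemma centroidWeightsIndicator_mem_stdSimplex {S : Finset V} (hS : S.Nonempty) :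
    S.centroidWeightsIndicator ℝ ∈ stdSimplex ℝ V :=
  ⟨fun _ ↦ Set.indicator_nonneg (fun _ _ ↦ inv_nonneg.2 (Nat.cast_nonneg _)) _,
    S.sum_centroidWeightsIndicator_eq_one_of_nonempty ℝ hS⟩

lemma adjMatrix_mulVec_centroidWeightsIndicator_of_isClique {S : Finset V}
    (hS : G.IsClique (S : Set V)) {v : V} (hv : v ∈ S) :
    (G.adjMatrix ℝ *ᵥ S.centroidWeightsIndicator ℝ) v = 1 - 1 / (S.card : ℝ) := by
  classical
  have neighbors_in_clique : {w ∈ G.neighborFinset v | w ∈ S} = S.erase v := by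
    ext w
    simp only [Finset.mem_filter, SimpleGraph.mem_neighborFinset, Finset.mem_erase]
    exact ⟨fun ⟨hvw, hw⟩ ↦ ⟨hvw.ne', hw⟩, fun ⟨hwv, hw⟩ ↦ ⟨hS hv hw hwv.symm, hw⟩⟩
  have card_ne_zero : (S.card : ℝ) ≠ 0 := Nat.cast_ne_zero.2 (Finset.card_ne_zero_of_mem hv)
  simp only [SimpleGraph.adjMatrix_mulVec_apply, Finset.centroidWeightsIndicator_def,
    Set.indicator_apply, Finset.mem_coe, ← Finset.sum_filter, neighbors_in_clique,
    Finset.centroidWeights_apply, Finset.sum_const, nsmul_eq_mul, Finset.cast_card_erase_of_mem hv]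
  field_simp

lemma motzkinStrausForm_centroidWeightsIndicator_of_isClique {S : Finset V}
    (hS : G.IsClique (S : Set V)) (hne : S.Nonempty) (c : ℝ) :
    motzkinStrausForm (G.adjMatrix ℝ) c (S.centroidWeightsIndicator ℝ) =
      1 - 1 / (S.card : ℝ) - c := by
  set u := S.centroidWeightsIndicator ℝ with hu
  have sum_u : ∑ i, u i = 1 := (centroidWeightsIndicator_mem_stdSimplex hne).2
  have mulVec_on_support (v : V) :
      u v * (G.adjMatrix ℝ *ᵥ u) v = u v * (1 - 1 / (S.card : ℝ)) := by
    by_cases hv : v ∈ S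
    · rw [adjMatrix_mulVec_centroidWeightsIndicator_of_isClique hS hv]
    · simp [hu, Finset.centroidWeightsIndicator_def, hv]
  rw [motzkinStrausForm, dotProduct, Finset.sum_congr rfl fun v _ ↦ mulVec_on_support v,
    ← Finset.sum_mul, sum_u]
  ring

end Clique

lemma one_div_sq_le_one_div_sub_one_div {k w n : ℕ} (hk : 1 ≤ k) (hkw : k < w) (hwn : w ≤ n) :
    1 / (n : ℝ) ^ 2 ≤ 1 / (k : ℝ) - 1 / (w : ℝ) := by
  have : (0 : ℝ) < k := by exact_mod_cast hk
  have : (0 : ℝ) < w := by exact_mod_cast hk.trans hkw.le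
  have hkw' : (k : ℝ) + 1 ≤ w := by exact_mod_cast hkw
  have hwn' : (w : ℝ) ≤ n := by exact_mod_cast hwn
  calc 1 / (n : ℝ) ^ 2 ≤ 1 / ((k : ℝ) * w) := by
        rw [sq]
        gcongr
        linarith
    _ ≤ (w - k) / ((k : ℝ) * w) := by
        gcongr
        linarith
    _ = 1 / (k : ℝ) - 1 / (w : ℝ) := by field_simp

theorem exists_mem_stdSimplex_one_div_sq_le_motzkinStrausForm {V : Type*} [Fintype V]
    (G : SimpleGraph V) [DecidableRel G.Adj] {k : ℕ} (hk₁ : 1 ≤ k) (hk : k < G.cliqueNum) :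
    ∃ u ∈ stdSimplex ℝ V, 1 / (Fintype.card V : ℝ) ^ 2 ≤
      motzkinStrausForm (G.adjMatrix ℝ) (1 - 1 / (k : ℝ)) u := by
  obtain ⟨S, hclique, hcard⟩ := G.exists_isNClique_cliqueNum
  have hne : S.Nonempty := Finset.card_pos.1 (by lia)
  refine ⟨S.centroidWeightsIndicator ℝ, centroidWeightsIndicator_mem_stdSimplex hne, ?_⟩
  rw [motzkinStrausForm_centroidWeightsIndicator_of_isClique hclique hne]
  linarith [one_div_sq_le_one_div_sub_one_div hk₁ (hcard ▸ hk) S.card_le_univ]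

lemma fkFun_eq_motzkinStrausForm {d : ℕ} (G : SimpleGraph (Fin d)) [DecidableRel G.Adj] (k : ℕ)
    (x : EuclideanSpace ℝ (Fin d)) :
    fkFun G k x = motzkinStrausForm (G.adjMatrix ℝ) (1 - 1 / (k : ℝ)) x.ofLp := by
  simp only [fkFun, motzkinStrausForm, dotProduct, mulVec, Finset.mul_sum]
  congr! 3
  ring

lemma sq_div_pow_eight_lt {δ n : ℝ} (hδ : 0 < δ) (hn : 1 ≤ n) :
    δ ^ 2 / (144 * n ^ 8) < 5 / 6 * (δ ^ 2 / n ^ 3) := by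
  have hpow : δ ^ 2 / n ^ 8 ≤ δ ^ 2 / n ^ 3 := by
    gcongr
    norm_num
  have hpos : 0 < δ ^ 2 / n ^ 3 := by positivity
  rw [mul_comm, ← div_div]
  linarith

theorem stmt_17_general {V : Type*} [Fintype V] (G : SimpleGraph V) [DecidableRel G.Adj]
    {δ : ℝ} (hδ₀ : 0 ≤ δ) (hδ : δ ≤ √(Fintype.card V))
    {k : ℕ} (hk₁ : 1 ≤ k) (hk : k < G.cliqueNum) :
    ∃ u ∈ stdSimplex ℝ V, ∀ x : V → ℝ, 0 ≤ x →
      ∑ i, x i ≤ δ / (12 * (Fintype.card V : ℝ) ^ 3) →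
        5 / 6 * (δ ^ 2 / (Fintype.card V : ℝ) ^ 3) ≤
          motzkinStrausForm (G.adjMatrix ℝ) (1 - 1 / (k : ℝ))
              ((1 - δ / √(Fintype.card V)) • x + (δ / √(Fintype.card V)) • u)
            - motzkinStrausForm (G.adjMatrix ℝ) (1 - 1 / (k : ℝ)) x := by
  obtain ⟨u, hu, hgap⟩ := exists_mem_stdSimplex_one_div_sq_le_motzkinStrausForm G hk₁ hk
  refine ⟨u, hu, fun x hx hxs ↦ ?_⟩
  have : Nonempty V := by
    by_contra hV
    simp [stdSimplex, not_nonempty_iff.1 hV] at hu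
  have hn : (1 : ℝ) ≤ Fintype.card V := by exact_mod_cast Fintype.card_pos (α := V)
  set n : ℝ := (Fintype.card V : ℝ)
  set t := δ / √n with ht
  have hsqrt : 1 ≤ √n := Real.one_le_sqrt.2 hn
  have hc₁ : 1 / (k : ℝ) ≤ 1 := div_le_one_of_le₀ (by exact_mod_cast hk₁) (Nat.cast_nonneg k)
  have mass_nonneg : 0 ≤ ∑ i, x i := Finset.sum_nonneg fun i _ ↦ hx i
  have mass_le_one : ∑ i, x i ≤ 1 := by
    have : √n ≤ n := Real.sqrt_le_iff.2 ⟨by positivity, le_self_pow₀ hn two_ne_zero⟩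
    have : n ≤ n ^ 3 := le_self_pow₀ hn three_ne_zero
    exact hxs.trans (div_le_one_of_le₀ (by linarith) (by positivity))
  have gain : δ ^ 2 / n ^ 3 ≤ t ^ 2 * motzkinStrausForm (G.adjMatrix ℝ) (1 - 1 / (k : ℝ)) u := calc
    δ ^ 2 / n ^ 3 = t ^ 2 * (1 / n ^ 2) := by
      rw [ht, div_pow, Real.sq_sqrt (by positivity)]
      field_simp
    _ ≤ _ := by gcongr
  have loss : 2 * t * ∑ i, x i ≤ 1 / 6 * (δ ^ 2 / n ^ 3) := calc
    2 * t * ∑ i, x i ≤ 2 * δ * (δ / (12 * n ^ 3)) := by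
      gcongr
      exact div_le_self hδ₀ hsqrt
    _ = 1 / 6 * (δ ^ 2 / n ^ 3) := by ring
  have net := le_motzkinStrausForm_convexComb_sub (A := G.adjMatrix ℝ) (c := 1 - 1 / (k : ℝ))
    adjMatrix_apply_nonneg adjMatrix_apply_le_one (sub_nonneg.2 hc₁) (sub_le_self _ (by positivity))
    (by positivity) (div_le_one_of_le₀ hδ (by positivity) : t ≤ 1) hx mass_le_one hu
  linarith

/-- Fix `δ ∈ (0,1]` and an integer `k` with `1 ≤ k < ω(G)`. Then
there is a point `x*` of the standard simplex such that the single map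
`φ(x) = (1 − δ/√d)·x + (δ/√d)·x*` satisfies: for every `x ∈ X` with
`‖x‖₁ ≤ δ/(12d³)`, `f_k(φ(x)) − f_k(x) > δ²/(144d⁸)`. -/
theorem stmt_17 {d : ℕ} (hd : 3 ≤ d) (G : SimpleGraph (Fin d)) [DecidableRel G.Adj]
    {δ : ℝ} (hδ0 : 0 < δ) (hδ1 : δ ≤ 1)
    {k : ℕ} (hk1 : 1 ≤ k) (hk : k < G.cliqueNum) :
    ∃ xstar : EuclideanSpace ℝ (Fin d),
      (∀ i, 0 ≤ xstar i) ∧ (∑ i, xstar i) = 1 ∧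
      ∀ x ∈ stdCorner d, (∑ i, x i) ≤ δ / (12 * (d : ℝ) ^ 3) →
        δ ^ 2 / (144 * (d : ℝ) ^ 8)
          < fkFun G k ((1 - δ / Real.sqrt d) • x + (δ / Real.sqrt d) • xstar)
            - fkFun G k x := by
  have hd₁ : (1 : ℝ) ≤ d := by exact_mod_cast (by lia : 1 ≤ d)
  obtain ⟨u, ⟨hu₀, hu₁⟩, himprove⟩ := stmt_17_general G hδ0.le
    (by simpa using hδ1.trans (Real.one_le_sqrt.2 hd₁)) hk1 hk
  refine ⟨WithLp.toLp 2 u, hu₀, hu₁, fun x hx hxs ↦ (sq_div_pow_eight_lt hδ0 hd₁).trans_le ?_⟩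
  simpa [fkFun_eq_motzkinStrausForm] using himprove x.ofLp hx.1 (by simpa using hxs)
end
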